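/- Convergence of infima of epi- and pointwise-convergent sums over nonempty compact sets: Let 𝒳 ⊆ ℝⁿ be closed, let β ∈ (0,1), and let f, f_ν, g, g_ν : 𝒳 → ℝ (ν ∈ ℕ) be real-valued functions such that f_ν epi-converges to f, f_ν converges pointwise to f, g_ν epi-converges to g, and g_ν converges pointwise to g. Then for every nonempty compact set K ⊆ 𝒳, inf_{y∈K} { f_ν(y) + β g_ν(y) } → inf_{y∈K} { f(y) + β g(y) } as ν → ∞. -/

import Mathlib

/-!
By a diagonal argument, epi-convergence upgrades to a local bound: if `c < f z`, then `c < F ν y`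
for all large `ν` and all `y` in one neighbourhood of `z`. Such bounds pass to sums and nonnegative
multiples, so `f + β g` inherits them. Combined with pointwise convergence they make the limit lower
semicontinuous, so it attains its minimum over `K`, and by compactness every `c` below that minimum
is eventually a lower bound of the approximants on all of `K`. The matching upper bound is pointwise
convergence at the minimiser.
-/

open Filter Topology Set

noncomputable section

/-- Epi-convergence of a sequence of extended-real-valued functions on a set `Z`. -/
def EpiConvergesOn {E : Type*} [TopologicalSpace E] (Z : Set E)
    (F : ℕ → E → EReal) (f : E → EReal) : Prop :=
  ∀ z ∈ Z,
    (∀ zs : ℕ → E, (∀ ν, zs ν ∈ Z) → Tendsto zs atTop (𝓝 z) →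
      f z ≤ liminf (fun ν => F ν (zs ν)) atTop) ∧
    (∃ zs : ℕ → E, (∀ ν, zs ν ∈ Z) ∧ Tendsto zs atTop (𝓝 z) ∧
      limsup (fun ν => F ν (zs ν)) atTop ≤ f z)

lemma exists_extend_apply_eq {ι κ E : Type*} (φ : ι → κ) (y : ι → E) (e : κ → E) (i : ι) :
    ∃ j, φ j = φ i ∧ Function.extend φ y e (φ i) = y j := by
  have hi : ∃ j, φ j = φ i := ⟨i, rfl⟩
  exact ⟨hi.choose, hi.choose_spec, dif_pos hi⟩

lemma tendsto_extend_cofinite {ι κ E : Type*} {φ : ι → κ} {y : ι → E} {e : κ → E} {l : Filter E}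
    (hy : Tendsto y cofinite l) (he : Tendsto e cofinite l) :
    Tendsto (Function.extend φ y e) cofinite l := by
  intro U hU
  have hfinite : (φ '' {i | y i ∉ U} ∪ {k | e k ∉ U}).Finite :=
    ((hy.eventually_mem hU).image φ).union (he.eventually_mem hU)
  refine hfinite.subset fun k hk => ?_
  by_cases hφ : ∃ i, φ i = k
  · obtain ⟨i, rfl⟩ := hφ
    obtain ⟨j, hj, hext⟩ := exists_extend_apply_eq φ y e i
    exact Or.inl ⟨j, fun hjU => hk (mem_preimage.2 (hext ▸ hjU)), hj⟩
  · exact Or.inr fun hkU => hk (mem_preimage.2 (Function.extend_apply' y e k hφ ▸ hkU))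

lemma exists_seq_tendsto_frequently_of_frequently_prod {E : Type*} {l : Filter E}
    [l.IsCountablyGenerated] {P : ℕ → E → Prop} (h : ∃ᶠ p in atTop ×ˢ l, P p.1 p.2) :
    ∃ y : ℕ → E, Tendsto y atTop l ∧ ∃ᶠ ν in atTop, P ν (y ν) := by
  obtain ⟨u, hu, hP⟩ := exists_seq_forall_of_frequently h
  have hfst : Tendsto (fun k => (u k).1) atTop atTop := tendsto_fst.comp hu
  have hsnd : Tendsto (fun k => (u k).2) atTop l := tendsto_snd.comp hu
  have := hsnd.neBot
  obtain ⟨w, hw⟩ := l.exists_seq_tendsto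
  refine ⟨Function.extend (fun k => (u k).1) (fun k => (u k).2) w, ?_,
    hfst.frequently (Frequently.of_forall fun k => ?_)⟩
  · rw [← Nat.cofinite_eq_atTop] at hsnd hw ⊢
    exact tendsto_extend_cofinite hsnd hw
  · obtain ⟨j, hj, hext⟩ := exists_extend_apply_eq (fun k => (u k).1) (fun k => (u k).2) w k
    rw [hext, ← hj]
    exact hP j

lemma eventually_forall_mem_of_isCompact {ι E : Type*} [TopologicalSpace E] {l : Filter ι}
    {K : Set E} (hK : IsCompact K) {P : ι → E → Prop}
    (h : ∀ z ∈ K, ∀ᶠ p in l ×ˢ 𝓝[K] z, P p.1 p.2) : ∀ᶠ i in l, ∀ y ∈ K, P i y := by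
  refine hK.induction_on (p := fun s => ∀ᶠ i in l, ∀ y ∈ s, P i y) (by simp)
    (fun s t hst ht => ht.mono fun i hi y hy => hi y (hst hy))
    (fun s t hs ht => (hs.and ht).mono fun i hi y hy => hy.elim (hi.1 y) (hi.2 y))
    fun z hz => ?_
  obtain ⟨p, hp, q, hq, hpq⟩ := eventually_prod_iff.1 (h z hz)
  exact ⟨{y | q y}, hq, hp.mono fun i hi y hy => hpq hi hy⟩

/-- The lower half of epi-convergence in neighbourhood form, `f ≤ e-liminf F` on `Z` along `l`:
every value below `f z` is a lower bound of `F i` near `z`, uniformly in all late `i`. Being stated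
with filters instead of sequences, it is stable under sums and under passing to compact sets. -/
def LeEpiLiminfOn {ι E α : Type*} [TopologicalSpace E] [LT α] (l : Filter ι) (F : ι → E → α)
    (f : E → α) (Z : Set E) : Prop :=
  ∀ z ∈ Z, ∀ c < f z, ∀ᶠ p in l ×ˢ 𝓝[Z] z, c < F p.1 p.2

lemma EpiConvergesOn.leEpiLiminfOn {E : Type*} [TopologicalSpace E] [FirstCountableTopology E]
    {Z : Set E} {F : ℕ → E → EReal} {f : E → EReal} (h : EpiConvergesOn Z F f) :
    LeEpiLiminfOn atTop F f Z := by
  intro z hz c hc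
  by_contra hcon
  have hfreq : ∃ᶠ p in atTop ×ˢ 𝓝 (⟨z, hz⟩ : Z), F p.1 p.2 ≤ c := by
    rw [nhdsWithin_eq_map_subtype_coe hz, prod_map_right] at hcon
    simpa only [eventually_map, not_eventually, not_lt, Prod.map_fst, Prod.map_snd, id_eq]
      using hcon
  obtain ⟨y, hy, hyc⟩ := exists_seq_tendsto_frequently_of_frequently_prod
    (P := fun ν (y : Z) => F ν y ≤ c) hfreq
  have hle : f z ≤ liminf (fun ν => F ν (y ν)) atTop :=
    (h z hz).1 (fun ν => y ν) (fun ν => (y ν).2) ((continuous_subtype_val.tendsto _).comp hy)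
  exact (hle.trans (liminf_le_of_frequently_le' hyc)).not_gt hc

namespace LeEpiLiminfOn

variable {ι E α : Type*} [TopologicalSpace E] {l : Filter ι} {F G : ι → E → α} {f g : E → α}
  {Z K : Set E}

lemma mono [LT α] (h : LeEpiLiminfOn l F f Z) (hKZ : K ⊆ Z) : LeEpiLiminfOn l F f K :=
  fun z hz c hc => (h z (hKZ hz) c hc).filter_mono (prod_mono le_rfl (nhdsWithin_mono z hKZ))

lemma of_strictMono_comp [LinearOrder α] {γ : Type*} [Preorder γ] {φ : α → γ} (hφ : StrictMono φ)
    (h : LeEpiLiminfOn l (fun i y => φ (F i y)) (fun y => φ (f y)) Z) : LeEpiLiminfOn l F f Z :=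
  fun z hz c hc => (h z hz (φ c) (hφ hc)).mono fun _ hp => hφ.lt_iff_lt.1 hp

lemma add [AddCommGroup α] [LinearOrder α] [IsOrderedAddMonoid α] [DenselyOrdered α]
    (hF : LeEpiLiminfOn l F f Z) (hG : LeEpiLiminfOn l G g Z) :
    LeEpiLiminfOn l (fun i y => F i y + G i y) (fun y => f y + g y) Z := by
  intro z hz c hc
  obtain ⟨a, hca, haf⟩ := exists_between (sub_lt_iff_lt_add.2 hc)
  filter_upwards [hF z hz a haf, hG z hz (c - a) (sub_lt_comm.1 hca)] with p hFp hGp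
  simpa only [add_sub_cancel] using add_lt_add hFp hGp

lemma const_mul [Field α] [LinearOrder α] [IsStrictOrderedRing α] {β : α} (hβ : 0 ≤ β)
    (h : LeEpiLiminfOn l F f Z) :
    LeEpiLiminfOn l (fun i y => β * F i y) (fun y => β * f y) Z := by
  intro z hz c hc
  obtain rfl | hβ := hβ.eq_or_lt
  · simp only [zero_mul] at hc ⊢
    exact .of_forall fun _ => hc
  · exact (h z hz (c / β) ((div_lt_iff₀' hβ).2 hc)).mono fun _ hp => (div_lt_iff₀' hβ).1 hp

lemma eventually_forall_lt [LT α] (h : LeEpiLiminfOn l F f K) (hK : IsCompact K) {c : α}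
    (hc : ∀ y ∈ K, c < f y) : ∀ᶠ i in l, ∀ y ∈ K, c < F i y :=
  eventually_forall_mem_of_isCompact hK fun z hz => h z hz c (hc z hz)

lemma lowerSemicontinuousOn [LinearOrder α] [DenselyOrdered α] [TopologicalSpace α]
    [ClosedIciTopology α] [l.NeBot] (h : LeEpiLiminfOn l F f Z)
    (hlim : ∀ y ∈ Z, Tendsto (fun i => F i y) l (𝓝 (f y))) : LowerSemicontinuousOn f Z := by
  intro z hz c hc
  obtain ⟨d, hcd, hdf⟩ := exists_between hc
  have hlocal : ∀ᶠ y in 𝓝[Z] z, ∀ᶠ i in l, d < F i y :=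
    (eventually_swap_iff.1 (h z hz d hdf)).curry
  filter_upwards [hlocal, self_mem_nhdsWithin] with y hy hyZ
  exact hcd.trans_le (ge_of_tendsto (hlim y hyZ) (hy.mono fun _ => le_of_lt))

theorem tendsto_sInf_image [ConditionallyCompleteLinearOrder α] [DenselyOrdered α]
    [TopologicalSpace α] [OrderTopology α] [l.NeBot] (h : LeEpiLiminfOn l F f K)
    (hlim : ∀ y ∈ K, Tendsto (fun i => F i y) l (𝓝 (f y))) (hK : IsCompact K)
    (hne : K.Nonempty) : Tendsto (fun i => sInf (F i '' K)) l (𝓝 (sInf (f '' K))) := by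
  obtain ⟨x, hx, hmin⟩ := (h.lowerSemicontinuousOn hlim).exists_isMinOn hne hK
  have hleast : IsLeast (f '' K) (f x) := ⟨mem_image_of_mem f hx, forall_mem_image.2 hmin⟩
  have hlower : ∀ c < f x, ∀ᶠ i in l, c ∈ lowerBounds (F i '' K) := fun c hc =>
    (h.eventually_forall_lt hK fun y hy => hc.trans_le (hmin hy)).mono
      fun i hi => forall_mem_image.2 fun y hy => (hi y hy).le
  -- `sInf` takes a junk value on sets that are not bounded below.
  have hbdd : ∀ᶠ i in l, BddBelow (F i '' K) := by
    by_cases hbot : IsMin (f x)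
    · exact .of_forall fun i => ⟨f x, fun a _ => hbot.isBot a⟩
    · obtain ⟨c, hc⟩ := not_isMin_iff.1 hbot
      exact (hlower c hc).mono fun i hi => ⟨c, hi⟩
  rw [hleast.csInf_eq, tendsto_order]
  constructor
  · intro a ha
    obtain ⟨c, hac, hc⟩ := exists_between ha
    exact (hlower c hc).mono fun i hi => hac.trans_le (le_csInf (hne.image _) hi)
  · intro a ha
    filter_upwards [hbdd, (hlim x hx).eventually_lt_const ha] with i hi hxa
    exact (csInf_le hi (mem_image_of_mem _ hx)).trans_lt hxa

end LeEpiLiminfOn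

theorem inf_sum_converges_of_epi_and_pointwise_general {E : Type*} [TopologicalSpace E]
    [FirstCountableTopology E] {X : Set E} {β : ℝ} (hβ : 0 ≤ β) {f g : E → ℝ} {fν gν : ℕ → E → ℝ}
    (hfe : EpiConvergesOn X (fun ν y => ((fν ν y : ℝ) : EReal)) (fun y => ((f y : ℝ) : EReal)))
    (hfp : ∀ y ∈ X, Tendsto (fun ν => fν ν y) atTop (𝓝 (f y)))
    (hge : EpiConvergesOn X (fun ν y => ((gν ν y : ℝ) : EReal)) (fun y => ((g y : ℝ) : EReal)))
    (hgp : ∀ y ∈ X, Tendsto (fun ν => gν ν y) atTop (𝓝 (g y)))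
    {K : Set E} (hKX : K ⊆ X) (hne : K.Nonempty) (hK : IsCompact K) :
    Tendsto (fun ν => sInf ((fun y => fν ν y + β * gν ν y) '' K)) atTop
      (𝓝 (sInf ((fun y => f y + β * g y) '' K))) := by
  have hf : LeEpiLiminfOn atTop fν f X := .of_strictMono_comp EReal.coe_strictMono hfe.leEpiLiminfOn
  have hg : LeEpiLiminfOn atTop gν g X := .of_strictMono_comp EReal.coe_strictMono hge.leEpiLiminfOn
  exact ((hf.add (hg.const_mul hβ)).mono hKX).tendsto_sInf_image
    (fun y hy => (hfp y (hKX hy)).add ((hgp y (hKX hy)).const_mul β)) hK hne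

/-- Convergence of infima of epi- and pointwise-convergent sums over
nonempty compact sets. -/
theorem inf_sum_converges_of_epi_and_pointwise {n : ℕ}
    (X : Set (EuclideanSpace ℝ (Fin n))) (hX : IsClosed X)
    (β : ℝ) (hβ : β ∈ Set.Ioo (0 : ℝ) 1)
    (f g : EuclideanSpace ℝ (Fin n) → ℝ)
    (fν gν : ℕ → EuclideanSpace ℝ (Fin n) → ℝ)
    (hfe : EpiConvergesOn X (fun ν y => ((fν ν y : ℝ) : EReal)) (fun y => ((f y : ℝ) : EReal)))
    (hfp : ∀ y ∈ X, Tendsto (fun ν => fν ν y) atTop (𝓝 (f y)))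
    (hge : EpiConvergesOn X (fun ν y => ((gν ν y : ℝ) : EReal)) (fun y => ((g y : ℝ) : EReal)))
    (hgp : ∀ y ∈ X, Tendsto (fun ν => gν ν y) atTop (𝓝 (g y))) :
    ∀ K : Set (EuclideanSpace ℝ (Fin n)), K ⊆ X → K.Nonempty → IsCompact K →
      Tendsto (fun ν => sInf ((fun y => fν ν y + β * gν ν y) '' K)) atTop
        (𝓝 (sInf ((fun y => f y + β * g y) '' K))) :=
  fun _ hKX hne hK =>
    inf_sum_converges_of_epi_and_pointwise_general hβ.1.le hfe hfp hge hgp hKX hne hK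

end
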